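/- Let G be a simple graph with Δ := Δ(G) ≥ 2, ν := ν(G) ≥ 2, such that ⌈Δ/2⌉ divides ν and |E(G)| = Δν + (ν/⌈Δ/2⌉)·⌊Δ/2⌋. Then every connected component D of G satisfies ν(D) = ⌈Δ/2⌉ and |E(D)| = Δ⌈Δ/2⌉ + ⌊Δ/2⌋. -/

import Mathlib

open scoped Classical

/-- `M` is a matching of `G`, given as a finite set of edges. -/
def IsMatchingFinset {V : Type*} (G : SimpleGraph V) (M : Finset (Sym2 V)) : Prop :=
  (M : Set (Sym2 V)) ⊆ G.edgeSet ∧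
    ∀ e ∈ M, ∀ f ∈ M, e ≠ f → ∀ v : V, ¬(v ∈ e ∧ v ∈ f)

/-- ν(G): the maximum size of a matching of `G`. -/
noncomputable def matchingNumber {V : Type*} (G : SimpleGraph V) : ℕ :=
  sSup {n | ∃ M : Finset (Sym2 V), IsMatchingFinset G M ∧ M.card = n}

/-- A proper edge coloring of `G` using colors `< n`. -/
def IsProperEdgeColoring {V : Type*} (G : SimpleGraph V) (n : ℕ) (c : Sym2 V → ℕ) : Prop :=
  (∀ e ∈ G.edgeSet, c e < n) ∧
    ∀ e ∈ G.edgeSet, ∀ f ∈ G.edgeSet, e ≠ f → (∃ v : V, v ∈ e ∧ v ∈ f) → c e ≠ c f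

/-- χ'(G): the edge chromatic index of `G`. -/
noncomputable def chromaticIndex {V : Type*} (G : SimpleGraph V) : ℕ :=
  sInf {n | ∃ c : Sym2 V → ℕ, IsProperEdgeColoring G n c}

/-- `G` is friendly-edge-colorable: its edge set is partitioned into maximum matchings. -/
noncomputable def Friendly {V : Type*} [Fintype V] (G : SimpleGraph V) : Prop :=
  ∃ P : Finset (Finset (Sym2 V)),
    (∀ M ∈ P, IsMatchingFinset G M ∧ M.card = matchingNumber G) ∧
    (∀ e, e ∈ G.edgeFinset ↔ ∃ M ∈ P, e ∈ M) ∧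
    ∀ M ∈ P, ∀ N ∈ P, M ≠ N → Disjoint M N

/-- The graph `G` with vertex `x` deleted. -/
def delVert {V : Type*} (G : SimpleGraph V) (x : V) : SimpleGraph {v : V // v ≠ x} :=
  G.induce {v : V | v ≠ x}

/-- `G` has a perfect matching. -/
def HasPerfectMatchingFinset {V : Type*} (G : SimpleGraph V) : Prop :=
  ∃ M : Finset (Sym2 V), IsMatchingFinset G M ∧ ∀ v : V, ∃ e ∈ M, v ∈ e

/-- `G` is factor-critical. -/
def FactorCritical {V : Type*} (G : SimpleGraph V) : Prop :=
  G.Connected ∧ ∀ x : V, HasPerfectMatchingFinset (delVert G x)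

/-!
Write `a = ⌈Δ/2⌉` and `b = ⌊Δ/2⌋`. The hypothesis says that `G` attains equality in the
Chvátal–Hanson bound `a * |E| ≤ (Δ * a + b) * ν`, which is proved by induction on `ν`. Deleting a
vertex covered by every maximum matching costs at most `Δ` edges and lowers `ν` by one, so such a
vertex makes the bound strict. If there is none, Gallai's lemma says that every component has
`2k + 1` vertices, where `k` is its matching number. Such a component has at most
`min (k * (2k + 1)) (Δ * k + b)` edges; this implies the bound, with equality only for `k = 0` or
`k = a`. Both sides of the bound are additive over components, so equality for `G` forces equality
for each of them.
-/

open Finset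

/-- The set of vertices covered by a set of edges. -/
noncomputable def coveredVerts {V : Type*} (M : Finset (Sym2 V)) : Finset V :=
  M.biUnion Sym2.toFinset

/-- A matching with `matchingNumber G` edges, that is, one of maximum size. -/
structure IsMaximumMatching {V : Type*} (G : SimpleGraph V) (M : Finset (Sym2 V)) : Prop where
  isMatchingFinset : IsMatchingFinset G M
  card_eq : M.card = matchingNumber G

/-- An essential vertex is one covered by every maximum matching; these are the vertices outside
the set `D(G)` of the Gallai–Edmonds decomposition. -/
def IsEssential {V : Type*} (G : SimpleGraph V) (v : V) : Prop :=
  ∀ M, IsMaximumMatching G M → v ∈ coveredVerts M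

/-- No maximum matching misses both of the distinct vertices `u` and `v`. It holds for `u = v`, so
that Gallai's lemma can propagate it along walks. -/
def NeverBothMissed {V : Type*} (G : SimpleGraph V) (u v : V) : Prop :=
  ∀ M, IsMaximumMatching G M → u ∉ coveredVerts M → v ∉ coveredVerts M → u = v

section Matchings

variable {V : Type*} {G H : SimpleGraph V} {M N : Finset (Sym2 V)} {e f : Sym2 V} {v : V}

lemma mem_coveredVerts : v ∈ coveredVerts M ↔ ∃ e ∈ M, v ∈ e := by
  simp [coveredVerts]

lemma coveredVerts_mono (h : M ⊆ N) : coveredVerts M ⊆ coveredVerts N :=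
  biUnion_subset_biUnion_of_subset_left _ h

lemma coveredVerts_insert : coveredVerts (insert e M) = e.toFinset ∪ coveredVerts M :=
  biUnion_insert

namespace IsMatchingFinset

lemma empty : IsMatchingFinset G ∅ :=
  ⟨by simp, by simp⟩

lemma subset (hM : IsMatchingFinset G M) (h : N ⊆ M) : IsMatchingFinset G N :=
  ⟨fun _ he => hM.1 (h he), fun e he f hf => hM.2 e (h he) f (h hf)⟩

lemma mono (hM : IsMatchingFinset H M) (h : H ≤ G) : IsMatchingFinset G M :=
  ⟨hM.1.trans (SimpleGraph.edgeSet_mono h), hM.2⟩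

lemma eq_of_mem_of_mem (hM : IsMatchingFinset G M) (he : e ∈ M) (hf : f ∈ M) (hve : v ∈ e)
    (hvf : v ∈ f) : e = f :=
  by_contra fun hne => hM.2 e he f hf hne v ⟨hve, hvf⟩

lemma insert (hM : IsMatchingFinset G M) (he : e ∈ G.edgeSet)
    (h : ∀ v ∈ e, v ∉ coveredVerts M) : IsMatchingFinset G (insert e M) := by
  simp only [mem_coveredVerts, not_exists, not_and] at h
  refine ⟨by simpa [Set.insert_subset_iff] using ⟨he, hM.1⟩, fun f hf g hg hne v hv => ?_⟩
  rcases mem_insert.1 hf with rfl | hfM <;> rcases mem_insert.1 hg with rfl | hgM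
  · exact hne rfl
  · exact h v hv.1 g hgM hv.2
  · exact h v hv.2 f hfM hv.1
  · exact hM.2 f hfM g hgM hne v hv

lemma card_coveredVerts (hM : IsMatchingFinset G M) : (coveredVerts M).card = 2 * M.card := by
  have hdisj : (M : Set (Sym2 V)).PairwiseDisjoint Sym2.toFinset := by
    intro e he f hf hne
    refine disjoint_left.2 fun v hve hvf => hM.2 e he f hf hne v ?_
    exact ⟨Sym2.mem_toFinset.1 hve, Sym2.mem_toFinset.1 hvf⟩
  rw [coveredVerts, card_biUnion hdisj, sum_const_nat (m := 2), mul_comm]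
  exact fun e he => e.card_toFinset_of_not_isDiag (G.not_isDiag_of_mem_edgeSet (hM.1 he))

lemma two_mul_card_le [Finite V] (hM : IsMatchingFinset G M) :
    2 * M.card ≤ Nat.card V := by
  cases nonempty_fintype V
  rw [← hM.card_coveredVerts, Nat.card_eq_fintype_card]
  exact card_le_univ _

end IsMatchingFinset

lemma bddAbove_card_isMatchingFinset [Finite V] (G : SimpleGraph V) :
    BddAbove {n | ∃ M : Finset (Sym2 V), IsMatchingFinset G M ∧ M.card = n} := by
  refine ⟨Nat.card V, ?_⟩
  rintro _ ⟨M, hM, rfl⟩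
  linarith [hM.two_mul_card_le]

lemma IsMatchingFinset.card_le_matchingNumber [Finite V] (hM : IsMatchingFinset G M) :
    M.card ≤ matchingNumber G :=
  le_csSup (bddAbove_card_isMatchingFinset G) ⟨M, hM, rfl⟩

lemma exists_isMaximumMatching [Finite V] (G : SimpleGraph V) : ∃ M, IsMaximumMatching G M := by
  obtain ⟨M, hM, hcard⟩ :=
    Nat.sSup_mem (s := {n | ∃ M, IsMatchingFinset G M ∧ M.card = n})
      ⟨0, ∅, IsMatchingFinset.empty, rfl⟩ (bddAbove_card_isMatchingFinset G)
  exact ⟨M, hM, hcard⟩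

lemma not_isEssential_iff :
    ¬ IsEssential G v ↔ ∃ M, IsMaximumMatching G M ∧ v ∉ coveredVerts M := by
  simp [IsEssential]

lemma matchingNumber_deleteIncidenceSet_lt [Finite V] (hv : IsEssential G v) :
    matchingNumber (G.deleteIncidenceSet v) < matchingNumber G := by
  obtain ⟨M, hM⟩ := exists_isMaximumMatching (G.deleteIncidenceSet v)
  have hMG : IsMatchingFinset G M := hM.isMatchingFinset.mono (G.deleteIncidenceSet_le v)
  have hvM : v ∉ coveredVerts M := by
    rw [mem_coveredVerts]
    rintro ⟨e, he, w, rfl⟩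
    have hvw : (G.deleteIncidenceSet v).Adj v w := hM.isMatchingFinset.1 he
    exact (SimpleGraph.deleteIncidenceSet_adj.1 hvw).2.1 rfl
  rw [← hM.card_eq]
  exact hMG.card_le_matchingNumber.lt_of_ne fun hcard => hvM (hv M ⟨hMG, hcard⟩)

end Matchings

section Gallai

variable {V : Type*} {G : SimpleGraph V} {M N : Finset (Sym2 V)} {t u v x : V}

lemma IsMaximumMatching.exists_mem_coveredVerts_notMem_ne (hM : IsMaximumMatching G M)
    (hN : IsMaximumMatching G N) (huv : u ≠ v) (huM : u ∉ coveredVerts M)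
    (hvM : v ∉ coveredVerts M) (huN : u ∈ coveredVerts N) (hvN : v ∈ coveredVerts N) (t : V) :
    ∃ x ∈ coveredVerts M, x ∉ coveredVerts N ∧ x ≠ t := by
  have hcard : (coveredVerts N).card = (coveredVerts M).card := by
    rw [hN.isMatchingFinset.card_coveredVerts, hM.isMatchingFinset.card_coveredVerts, hN.card_eq,
      hM.card_eq]
  have hlt : 1 < (coveredVerts M \ coveredVerts N).card := by
    rw [← card_sdiff_comm hcard, one_lt_card]
    exact ⟨u, mem_sdiff.2 ⟨huN, huM⟩, v, mem_sdiff.2 ⟨hvN, hvM⟩, huv⟩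
  obtain ⟨x, hx, hxt⟩ := exists_mem_ne hlt t
  exact ⟨x, (mem_sdiff.1 hx).1, (mem_sdiff.1 hx).2, hxt⟩

variable [Finite V]

lemma IsMaximumMatching.mem_coveredVerts_of_adj (hM : IsMaximumMatching G M) (huv : G.Adj u v)
    (hu : u ∉ coveredVerts M) : v ∈ coveredVerts M := by
  by_contra hv
  have hins : IsMatchingFinset G (insert s(u, v) M) :=
    hM.isMatchingFinset.insert huv <| by simpa using ⟨hu, hv⟩
  have hnotMem : s(u, v) ∉ M := fun h => hu (mem_coveredVerts.2 ⟨_, h, Sym2.mem_mk_left u v⟩)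
  have hcard := hins.card_le_matchingNumber
  rw [card_insert_of_notMem hnotMem, hM.card_eq] at hcard
  omega

/-- The exchange step: the `M`-edge at `x` replaces the `N`-edge at its other end. -/
lemma IsMaximumMatching.exists_card_inter_lt (hN : IsMaximumMatching G N)
    (hM : IsMatchingFinset G M) (hxM : x ∈ coveredVerts M) (hxN : x ∉ coveredVerts N)
    (htN : t ∉ coveredVerts N) (hxt : x ≠ t) :
    ∃ N', IsMaximumMatching G N' ∧ t ∉ coveredVerts N' ∧ (M ∩ N).card < (M ∩ N').card := by
  obtain ⟨_, heM, y, rfl⟩ := mem_coveredVerts.1 hxM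
  have hxy : G.Adj x y := hM.1 heM
  have hyN : y ∈ coveredVerts N := hN.mem_coveredVerts_of_adj hxy hxN
  obtain ⟨f, hfN, hyf⟩ := mem_coveredVerts.1 hyN
  have heN : s(x, y) ∉ N := fun h => hxN (mem_coveredVerts.2 ⟨_, h, Sym2.mem_mk_left x y⟩)
  have hfM : f ∉ M := fun hf =>
    heN (hM.eq_of_mem_of_mem heM hf (Sym2.mem_mk_right x y) hyf ▸ hfN)
  have hsub : coveredVerts (N.erase f) ⊆ coveredVerts N := coveredVerts_mono (erase_subset _ _)
  have hy : y ∉ coveredVerts (N.erase f) := by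
    rw [mem_coveredVerts]
    rintro ⟨g, hg, hyg⟩
    obtain ⟨hgf, hgN⟩ := mem_erase.1 hg
    exact hgf (hN.isMatchingFinset.eq_of_mem_of_mem hgN hfN hyg hyf)
  refine ⟨insert s(x, y) (N.erase f), ⟨?_, ?_⟩, ?_, ?_⟩
  · refine (hN.isMatchingFinset.subset (erase_subset _ _)).insert hxy ?_
    simpa using ⟨fun h => hxN (hsub h), hy⟩
  · rw [card_insert_of_notMem fun h => heN (mem_of_mem_erase h), card_erase_add_one hfN,
      hN.card_eq]
  · have hyt : t ≠ y := fun h => htN (h ▸ hyN)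
    simpa [coveredVerts_insert, hxt.symm, hyt] using fun h => htN (hsub h)
  · rw [inter_insert_of_mem heM, inter_erase,
      erase_eq_of_notMem fun h => hfM (mem_of_mem_inter_left h),
      card_insert_of_notMem fun h => heN (mem_of_mem_inter_right h)]
    exact Nat.lt_succ_self _

/-- A maximum matching missing `t` that shares as many edges as possible with a maximum matching
missing `u` and `v` would still admit an exchange step. -/
lemma NeverBothMissed.trans (hut : NeverBothMissed G u t) (htv : NeverBothMissed G t v)
    (ht : ¬ IsEssential G t) : NeverBothMissed G u v := by
  intro M hM huM hvM
  cases nonempty_fintype V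
  by_contra huv
  have htM : t ∈ coveredVerts M := by
    by_contra htM
    exact huv ((hut M hM huM htM).trans (htv M hM htM hvM))
  obtain ⟨N₀, hN₀⟩ := not_isEssential_iff.1 ht
  obtain ⟨N, hN', hmax⟩ := exists_max_image
    (univ.filter fun N => IsMaximumMatching G N ∧ t ∉ coveredVerts N) (fun N => (M ∩ N).card)
    ⟨N₀, by simpa using hN₀⟩
  obtain ⟨hN, htN⟩ := (mem_filter_univ N).1 hN'
  have huN : u ∈ coveredVerts N := by
    by_contra huN
    exact huM (hut N hN huN htN ▸ htM)
  have hvN : v ∈ coveredVerts N := by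
    by_contra hvN
    exact hvM (htv N hN htN hvN ▸ htM)
  obtain ⟨x, hxM, hxN, hxt⟩ :=
    hM.exists_mem_coveredVerts_notMem_ne hN huv huM hvM huN hvN t
  obtain ⟨N', hNmax', htN', hlt⟩ :=
    hN.exists_card_inter_lt hM.isMatchingFinset hxM hxN htN hxt
  exact hlt.not_ge (hmax N' ((mem_filter_univ N').2 ⟨hNmax', htN'⟩))

lemma neverBothMissed_of_reachable (hG : ∀ v, ¬ IsEssential G v) (h : G.Reachable u v) :
    NeverBothMissed G u v := by
  obtain ⟨p⟩ := h
  induction p with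
  | nil => exact fun _ _ _ _ => rfl
  | cons hadj _ ih =>
    refine NeverBothMissed.trans (fun M hM hu hv => ?_) ih (hG _)
    exact absurd (hM.mem_coveredVerts_of_adj hadj hu) hv

/-- Gallai's lemma. -/
lemma natCard_eq_two_mul_matchingNumber_add_one (hconn : G.Connected)
    (hG : ∀ v, ¬ IsEssential G v) : Nat.card V = 2 * matchingNumber G + 1 := by
  cases nonempty_fintype V
  obtain ⟨v⟩ := hconn.nonempty
  obtain ⟨M, hM, hvM⟩ := not_isEssential_iff.1 (hG v)
  have hcompl : (coveredVerts M)ᶜ = {v} := by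
    ext w
    rw [mem_compl, mem_singleton]
    refine ⟨fun hw => ?_, fun hw => hw ▸ hvM⟩
    exact neverBothMissed_of_reachable hG (hconn.preconnected w v) M hM hw hvM
  rw [Nat.card_eq_fintype_card, ← card_add_card_compl (coveredVerts M), hcompl, card_singleton,
    hM.isMatchingFinset.card_coveredVerts, hM.card_eq]

end Gallai

section Components

/-- The edges of `M` with both ends in `s`, as edges on the vertex type `s`. -/
noncomputable def restrictEdges {V : Type*} (M : Finset (Sym2 V)) (s : Set V) : Finset (Sym2 s) :=
  M.preimage (Sym2.map Subtype.val) (Sym2.map.injective Subtype.val_injective).injOn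

variable {V : Type*} {G : SimpleGraph V} {M : Finset (Sym2 V)}

lemma mem_restrictEdges {s : Set V} {e : Sym2 s} :
    e ∈ restrictEdges M s ↔ e.map Subtype.val ∈ M :=
  mem_preimage

lemma map_val_mem_edgeSet_iff {s : Set V} {e : Sym2 s} :
    e.map Subtype.val ∈ G.edgeSet ↔ e ∈ (G.induce s).edgeSet :=
  (SimpleGraph.Embedding.induce s).map_mem_edgeSet_iff

lemma IsMatchingFinset.restrictEdges (hM : IsMatchingFinset G M) (s : Set V) :
    IsMatchingFinset (G.induce s) (restrictEdges M s) := by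
  refine ⟨fun e he => map_val_mem_edgeSet_iff.1 (hM.1 (mem_restrictEdges.1 he)), ?_⟩
  intro e he f hf hne v hv
  refine hM.2 _ (mem_restrictEdges.1 he) _ (mem_restrictEdges.1 hf)
    ((Sym2.map.injective Subtype.val_injective).ne hne) v ?_
  exact ⟨Sym2.mem_map.2 ⟨v, hv.1, rfl⟩, Sym2.mem_map.2 ⟨v, hv.2, rfl⟩⟩

lemma coe_mem_coveredVerts_of_mem_restrictEdges {s : Set V} {v : s}
    (hv : v ∈ coveredVerts (restrictEdges M s)) : (v : V) ∈ coveredVerts M := by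
  obtain ⟨e, he, hve⟩ := mem_coveredVerts.1 hv
  exact mem_coveredVerts.2 ⟨_, mem_restrictEdges.1 he, Sym2.mem_map.2 ⟨v, hve, rfl⟩⟩

lemma component_eq_of_mem_map_val {c c' : G.ConnectedComponent} {e : Sym2 c.supp}
    {e' : Sym2 c'.supp} {v : V} (hv : v ∈ e.map Subtype.val) (hv' : v ∈ e'.map Subtype.val) :
    c = c' := by
  obtain ⟨w, -, rfl⟩ := Sym2.mem_map.1 hv
  obtain ⟨w', -, hw⟩ := Sym2.mem_map.1 hv'
  exact w.2.symm.trans (hw ▸ w'.2)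

variable [Fintype G.ConnectedComponent]

/-- The edge set on `V` assembled from one edge set on each connected component of `G`. -/
noncomputable def componentUnion (G : SimpleGraph V) [Fintype G.ConnectedComponent]
    (N : ∀ c : G.ConnectedComponent, Finset (Sym2 c.supp)) : Finset (Sym2 V) :=
  univ.biUnion fun c => (N c).map (Function.Embedding.subtype (· ∈ c.supp)).sym2Map

lemma mem_componentUnion {N : ∀ c : G.ConnectedComponent, Finset (Sym2 c.supp)} {e : Sym2 V} :
    e ∈ componentUnion G N ↔ ∃ c, ∃ e' ∈ N c, e'.map Subtype.val = e := by
  simp [componentUnion]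

lemma card_componentUnion (N : ∀ c : G.ConnectedComponent, Finset (Sym2 c.supp)) :
    (componentUnion G N).card = ∑ c, (N c).card := by
  rw [componentUnion, card_biUnion]
  · exact sum_congr rfl fun c _ => card_map _
  · intro c _ c' _ hne
    simp only [disjoint_left, mem_map, not_exists, not_and]
    rintro _ ⟨e, -, rfl⟩ e' - (hee' : e'.map Subtype.val = e.map Subtype.val)
    have hv := Sym2.out_fst_mem (e.map Subtype.val)
    exact hne (component_eq_of_mem_map_val hv (e' := e') (hee' ▸ hv))

lemma IsMatchingFinset.componentUnion {N : ∀ c : G.ConnectedComponent, Finset (Sym2 c.supp)}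
    (hN : ∀ c, IsMatchingFinset (G.induce c.supp) (N c)) :
    IsMatchingFinset G (componentUnion G N) := by
  refine ⟨fun e he => ?_, fun e he f hf hne v hv => ?_⟩
  · obtain ⟨c, e', he', rfl⟩ := mem_componentUnion.1 he
    exact map_val_mem_edgeSet_iff.2 ((hN c).1 he')
  · obtain ⟨c, e', he', rfl⟩ := mem_componentUnion.1 he
    obtain ⟨c', f', hf', rfl⟩ := mem_componentUnion.1 hf
    obtain rfl := component_eq_of_mem_map_val hv.1 hv.2
    obtain ⟨w, hwe, rfl⟩ := Sym2.mem_map.1 hv.1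
    obtain ⟨w', hwf, hww'⟩ := Sym2.mem_map.1 hv.2
    obtain rfl := Subtype.ext hww'
    exact hne (congrArg _ ((hN c).eq_of_mem_of_mem he' hf' hwe hwf))

lemma componentUnion_restrictEdges (hM : (M : Set (Sym2 V)) ⊆ G.edgeSet) :
    (componentUnion G fun c => restrictEdges M c.supp) = M := by
  ext e
  simp only [mem_componentUnion, mem_restrictEdges]
  refine ⟨by rintro ⟨c, e, he, rfl⟩; exact he, fun he => ?_⟩
  induction e with | _ x y =>
  have hxy : G.Adj x y := hM he
  have hy : y ∈ (G.connectedComponentMk x).supp :=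
    SimpleGraph.ConnectedComponent.sound hxy.symm.reachable
  exact ⟨G.connectedComponentMk x, s(⟨x, rfl⟩, ⟨y, hy⟩), he, rfl⟩

lemma sum_card_restrictEdges_supp (hM : (M : Set (Sym2 V)) ⊆ G.edgeSet) :
    ∑ c : G.ConnectedComponent, (restrictEdges M c.supp).card = M.card := by
  rw [← card_componentUnion, componentUnion_restrictEdges hM]

lemma card_edgeFinset_eq_sum_components [Fintype V] [DecidableRel G.Adj] :
    G.edgeFinset.card = ∑ c : G.ConnectedComponent, (G.induce c.supp).edgeFinset.card := by
  rw [← sum_card_restrictEdges_supp (M := G.edgeFinset) G.coe_edgeFinset.subset]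
  refine sum_congr rfl fun c _ => congrArg card ?_
  ext e
  rw [mem_restrictEdges, SimpleGraph.mem_edgeFinset, map_val_mem_edgeSet_iff,
    SimpleGraph.mem_edgeFinset]

lemma matchingNumber_eq_sum_components [Finite V] :
    matchingNumber G = ∑ c : G.ConnectedComponent, matchingNumber (G.induce c.supp) := by
  apply le_antisymm
  · obtain ⟨M, hM⟩ := exists_isMaximumMatching G
    rw [← hM.card_eq, ← sum_card_restrictEdges_supp hM.isMatchingFinset.1]
    exact sum_le_sum fun c _ => (hM.isMatchingFinset.restrictEdges c.supp).card_le_matchingNumber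
  · choose N hN using fun c : G.ConnectedComponent => exists_isMaximumMatching (G.induce c.supp)
    simp only [← fun c => (hN c).card_eq]
    rw [← card_componentUnion]
    exact (IsMatchingFinset.componentUnion fun c => (hN c).isMatchingFinset).card_le_matchingNumber

end Components

section ComponentsOfFinite

variable {V : Type*} [Finite V] {G : SimpleGraph V} {M : Finset (Sym2 V)}

lemma IsMaximumMatching.restrictEdges_supp (hM : IsMaximumMatching G M)
    (c : G.ConnectedComponent) : IsMaximumMatching (G.induce c.supp) (restrictEdges M c.supp) := by
  cases nonempty_fintype G.ConnectedComponent
  have hres (c : G.ConnectedComponent) := hM.isMatchingFinset.restrictEdges c.supp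
  have hsum : ∑ c : G.ConnectedComponent, (restrictEdges M c.supp).card =
      ∑ c : G.ConnectedComponent, matchingNumber (G.induce c.supp) := by
    rw [sum_card_restrictEdges_supp hM.isMatchingFinset.1, hM.card_eq,
      matchingNumber_eq_sum_components]
  rw [sum_eq_sum_iff_of_le fun c _ => (hres c).card_le_matchingNumber] at hsum
  exact ⟨hres c, hsum c (mem_univ c)⟩

lemma card_supp_eq_two_mul_matchingNumber_add_one (hG : ∀ v, ¬ IsEssential G v)
    (c : G.ConnectedComponent) :
    Nat.card c.supp = 2 * matchingNumber (G.induce c.supp) + 1 := by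
  refine natCard_eq_two_mul_matchingNumber_add_one c.connected_toSimpleGraph fun v => ?_
  obtain ⟨M, hM, hvM⟩ := not_isEssential_iff.1 (hG v)
  exact not_isEssential_iff.2 ⟨_, hM.restrictEdges_supp c,
    fun hv => hvM (coe_mem_coveredVerts_of_mem_restrictEdges hv)⟩

end ComponentsOfFinite

section OddOrder

variable {V : Type*} [Fintype V] {G : SimpleGraph V} [DecidableRel G.Adj] {d k : ℕ}

lemma card_edgeFinset_le_mul_of_card_le (hV : Nat.card V = 2 * k + 1)
    (hd : Nat.card V ≤ d) : G.edgeFinset.card ≤ d * k := by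
  calc G.edgeFinset.card ≤ (Fintype.card V).choose 2 := G.card_edgeFinset_le_card_choose_two
    _ = (2 * k + 1) * k := by
      rw [← Nat.card_eq_fintype_card, hV, Nat.choose_two_right, Nat.add_sub_cancel, mul_left_comm,
        Nat.mul_div_cancel_left _ two_pos]
    _ ≤ d * k := Nat.mul_le_mul_right k (hV ▸ hd)

lemma card_edgeFinset_le_mul_add_of_degree_le (hV : Nat.card V = 2 * k + 1)
    (hdeg : ∀ v, G.degree v ≤ d) : G.edgeFinset.card ≤ d * k + d / 2 := by
  have htwo : 2 * G.edgeFinset.card ≤ 2 * (d * k) + d := by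
    calc 2 * G.edgeFinset.card = ∑ v, G.degree v := G.sum_degrees_eq_twice_card_edges.symm
      _ ≤ Fintype.card V * d := sum_le_card_nsmul _ _ _ fun v _ => hdeg v
      _ = 2 * (d * k) + d := by
        rw [← Nat.card_eq_fintype_card, hV]
        ring
  omega

lemma ceil_half_mul_card_edgeFinset_le_of_card_eq (hV : Nat.card V = 2 * k + 1)
    (hdeg : ∀ v, G.degree v ≤ d) :
    (d + 1) / 2 * G.edgeFinset.card ≤ (d * ((d + 1) / 2) + d / 2) * k := by
  rcases lt_or_ge k ((d + 1) / 2) with hk | hk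
  · calc (d + 1) / 2 * G.edgeFinset.card ≤ (d + 1) / 2 * (d * k) :=
          Nat.mul_le_mul_left _ (card_edgeFinset_le_mul_of_card_le hV (by omega))
      _ = d * ((d + 1) / 2) * k := by ring
      _ ≤ (d * ((d + 1) / 2) + d / 2) * k := Nat.mul_le_mul_right k (Nat.le_add_right _ _)
  · calc (d + 1) / 2 * G.edgeFinset.card ≤ (d + 1) / 2 * (d * k + d / 2) :=
          Nat.mul_le_mul_left _ (card_edgeFinset_le_mul_add_of_degree_le hV hdeg)
      _ = d * ((d + 1) / 2) * k + d / 2 * ((d + 1) / 2) := by ring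
      _ ≤ d * ((d + 1) / 2) * k + d / 2 * k := by gcongr
      _ = (d * ((d + 1) / 2) + d / 2) * k := by ring

lemma eq_zero_or_eq_ceil_half_of_card_edgeFinset_eq (hd : 2 ≤ d)
    (hV : Nat.card V = 2 * k + 1) (hdeg : ∀ v, G.degree v ≤ d)
    (heq : (d + 1) / 2 * G.edgeFinset.card = (d * ((d + 1) / 2) + d / 2) * k) :
    k = 0 ∨ k = (d + 1) / 2 := by
  have hfloor : 0 < d / 2 := by omega
  rcases lt_or_ge k ((d + 1) / 2) with hk | hk
  · have hE := Nat.mul_le_mul_left ((d + 1) / 2)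
      (card_edgeFinset_le_mul_of_card_le (G := G) hV (d := d) (by omega))
    have hzero : d / 2 * k ≤ d / 2 * 0 := by linarith
    exact .inl (Nat.le_zero.1 (Nat.le_of_mul_le_mul_left hzero hfloor))
  · have hE := Nat.mul_le_mul_left ((d + 1) / 2)
      (card_edgeFinset_le_mul_add_of_degree_le hV hdeg)
    have hle : d / 2 * k ≤ d / 2 * ((d + 1) / 2) := by linarith
    exact .inr (le_antisymm (Nat.le_of_mul_le_mul_left hle hfloor) hk)

end OddOrder

section ChvatalHanson

variable {V : Type*} [Fintype V] {G : SimpleGraph V} [DecidableRel G.Adj] {d : ℕ}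

lemma degree_induce_supp (c : G.ConnectedComponent) (v : c.supp) :
    (G.induce c.supp).degree v = G.degree v :=
  SimpleGraph.degree_induce_of_neighborSet_subset fun _ hw => c.mem_supp_of_adj_mem_supp v.2 hw

lemma ceil_half_mul_card_edgeFinset_supp_le (hG : ∀ v, ¬ IsEssential G v)
    (hdeg : ∀ v, G.degree v ≤ d) (c : G.ConnectedComponent) :
    (d + 1) / 2 * (G.induce c.supp).edgeFinset.card ≤
      (d * ((d + 1) / 2) + d / 2) * matchingNumber (G.induce c.supp) :=
  ceil_half_mul_card_edgeFinset_le_of_card_eq (card_supp_eq_two_mul_matchingNumber_add_one hG c)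
    fun v => (degree_induce_supp c v).trans_le (hdeg v)

lemma ceil_half_mul_card_edgeFinset_add_le_of_isEssential {v : V} (hv : IsEssential G v)
    (hdeg : G.degree v ≤ d)
    (hdel : (d + 1) / 2 * (G.deleteIncidenceSet v).edgeFinset.card ≤
      (d * ((d + 1) / 2) + d / 2) * matchingNumber (G.deleteIncidenceSet v)) :
    (d + 1) / 2 * G.edgeFinset.card + d / 2 ≤
      (d * ((d + 1) / 2) + d / 2) * matchingNumber G := by
  have hedges : G.edgeFinset.card ≤ (G.deleteIncidenceSet v).edgeFinset.card + d := by
    have := G.card_edgeFinset_deleteIncidenceSet v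
    omega
  calc (d + 1) / 2 * G.edgeFinset.card + d / 2
      ≤ (d + 1) / 2 * ((G.deleteIncidenceSet v).edgeFinset.card + d) + d / 2 := by gcongr
    _ = (d + 1) / 2 * (G.deleteIncidenceSet v).edgeFinset.card +
          (d * ((d + 1) / 2) + d / 2) := by ring
    _ ≤ (d * ((d + 1) / 2) + d / 2) * (matchingNumber (G.deleteIncidenceSet v) + 1) := by
      rw [mul_add_one]
      gcongr
    _ ≤ (d * ((d + 1) / 2) + d / 2) * matchingNumber G :=
      Nat.mul_le_mul_left _ (matchingNumber_deleteIncidenceSet_lt hv)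

/-- The Chvátal–Hanson bound `|E| ≤ d ν + ⌊d/2⌋ ν / ⌈d/2⌉`, cleared of its denominator. -/
theorem ceil_half_mul_card_edgeFinset_le (G : SimpleGraph V) [DecidableRel G.Adj]
    (hdeg : ∀ v, G.degree v ≤ d) :
    (d + 1) / 2 * G.edgeFinset.card ≤ (d * ((d + 1) / 2) + d / 2) * matchingNumber G := by
  induction hn : matchingNumber G using Nat.strong_induction_on generalizing G with | _ n ih =>
  subst hn
  by_cases hG : ∀ v, ¬ IsEssential G v
  · rw [card_edgeFinset_eq_sum_components, matchingNumber_eq_sum_components, mul_sum, mul_sum]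
    exact sum_le_sum fun c _ => ceil_half_mul_card_edgeFinset_supp_le hG hdeg c
  · obtain ⟨v, hv⟩ := not_forall_not.1 hG
    have hdel := ih _ (matchingNumber_deleteIncidenceSet_lt hv) (G.deleteIncidenceSet v)
      (fun w => (SimpleGraph.degree_le_of_le (G.deleteIncidenceSet_le v)).trans (hdeg w)) rfl
    exact (Nat.le_add_right _ _).trans
      (ceil_half_mul_card_edgeFinset_add_le_of_isEssential hv (hdeg v) hdel)

lemma not_isEssential_of_card_edgeFinset_eq (hd : 2 ≤ d) (hdeg : ∀ v, G.degree v ≤ d)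
    (heq : (d + 1) / 2 * G.edgeFinset.card = (d * ((d + 1) / 2) + d / 2) * matchingNumber G)
    (v : V) : ¬ IsEssential G v := by
  intro hv
  have hdel := ceil_half_mul_card_edgeFinset_le (G.deleteIncidenceSet v) fun w =>
    (SimpleGraph.degree_le_of_le (G.deleteIncidenceSet_le v)).trans (hdeg w)
  have hle := ceil_half_mul_card_edgeFinset_add_le_of_isEssential hv (hdeg v) hdel
  omega

lemma ceil_half_mul_card_edgeFinset_supp_eq (hd : 2 ≤ d) (hdeg : ∀ v, G.degree v ≤ d)
    (heq : (d + 1) / 2 * G.edgeFinset.card = (d * ((d + 1) / 2) + d / 2) * matchingNumber G)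
    (c : G.ConnectedComponent) :
    (d + 1) / 2 * (G.induce c.supp).edgeFinset.card =
      (d * ((d + 1) / 2) + d / 2) * matchingNumber (G.induce c.supp) := by
  have hG := not_isEssential_of_card_edgeFinset_eq hd hdeg heq
  rw [card_edgeFinset_eq_sum_components, matchingNumber_eq_sum_components, mul_sum, mul_sum,
    sum_eq_sum_iff_of_le fun c _ => ceil_half_mul_card_edgeFinset_supp_le hG hdeg c] at heq
  exact heq c (mem_univ c)

end ChvatalHanson

theorem stmt_7_general {V : Type*} [Fintype V] (G : SimpleGraph V) (hΔ : 2 ≤ G.maxDegree)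
    (hdvd : (G.maxDegree + 1) / 2 ∣ matchingNumber G)
    (hE : G.edgeFinset.card =
      G.maxDegree * matchingNumber G +
        (matchingNumber G / ((G.maxDegree + 1) / 2)) * (G.maxDegree / 2))
    (c : G.ConnectedComponent) (hc : c.supp.Nontrivial) :
    matchingNumber (G.induce c.supp) = (G.maxDegree + 1) / 2 ∧
      (G.induce c.supp).edgeFinset.card =
        G.maxDegree * ((G.maxDegree + 1) / 2) + G.maxDegree / 2 := by
  have hceil : 0 < (G.maxDegree + 1) / 2 := by omega
  have hdeg (v : V) : G.degree v ≤ G.maxDegree := G.degree_le_maxDegree v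
  have heq : (G.maxDegree + 1) / 2 * G.edgeFinset.card =
      (G.maxDegree * ((G.maxDegree + 1) / 2) + G.maxDegree / 2) * matchingNumber G := by
    rw [hE, mul_add, ← mul_assoc, ← mul_assoc, Nat.mul_div_cancel' hdvd]
    ring
  have hodd := card_supp_eq_two_mul_matchingNumber_add_one
    (not_isEssential_of_card_edgeFinset_eq hΔ hdeg heq) c
  have heq_c := ceil_half_mul_card_edgeFinset_supp_eq hΔ hdeg heq c
  have hne : matchingNumber (G.induce c.supp) ≠ 0 := by
    have := Finite.one_lt_card_iff_nontrivial.2 hc.coe_sort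
    omega
  have hν : matchingNumber (G.induce c.supp) = (G.maxDegree + 1) / 2 :=
    (eq_zero_or_eq_ceil_half_of_card_edgeFinset_eq hΔ hodd
      (fun v => (degree_induce_supp c v).trans_le (hdeg v)) heq_c).resolve_left hne
  rw [hν, mul_comm] at heq_c
  exact ⟨hν, Nat.eq_of_mul_eq_mul_right hceil heq_c⟩

theorem stmt_7 {V : Type*} [Fintype V] (G : SimpleGraph V) (hΔ : 2 ≤ G.maxDegree)
    (hν : 2 ≤ matchingNumber G)
    (hiso : ∀ v : V, 0 < G.degree v)
    (hdvd : (G.maxDegree + 1) / 2 ∣ matchingNumber G)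
    (hE : G.edgeFinset.card =
      G.maxDegree * matchingNumber G +
        (matchingNumber G / ((G.maxDegree + 1) / 2)) * (G.maxDegree / 2)) :
    ∀ c : G.ConnectedComponent,
      matchingNumber (G.induce c.supp) = (G.maxDegree + 1) / 2 ∧
      (G.induce c.supp).edgeFinset.card =
        G.maxDegree * ((G.maxDegree + 1) / 2) + G.maxDegree / 2 := by
  intro c
  obtain ⟨v, hv⟩ := c.nonempty_supp
  obtain ⟨w, hvw⟩ := (G.degree_pos_iff_exists_adj v).1 (hiso v)
  exact stmt_7_general G hΔ hdvd hE c ⟨v, hv, w, c.mem_supp_of_adj_mem_supp hv hvw, hvw.ne⟩
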